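/- Let Q be a finite quiver without loops and multiedges and let R be a lluf proper subquiver of Q such that each connected component of R is a full subquiver of Q. If the contraction Q/R is acyclic, then DE(R) is a face of DE(Q). -/

import Mathlib

open scoped BigOperators

/-- The vector `ε_(v,w) = e_v - e_w` in `ℝ^V`. -/
def epsVec {V : Type*} [DecidableEq V] (e : V × V) : V → ℝ :=
  fun u => (if u = e.1 then (1 : ℝ) else 0) - (if u = e.2 then (1 : ℝ) else 0)

/-- The directed edge polytope of the quiver with edge set `E`. -/
def DE {V : Type*} [DecidableEq V] (E : Set (V × V)) : Set (V → ℝ) :=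
  convexHull ℝ (epsVec '' E)

/-- The edge relation of a quiver. -/
def edgeRel {V : Type*} (E : Set (V × V)) : V → V → Prop := fun a b => (a, b) ∈ E

/-- Number of connected components (with respect to undirected walks). -/
noncomputable def numComponents {V : Type*} (E : Set (V × V)) : ℕ :=
  Nat.card (Quot (Relation.EqvGen (edgeRel E)))

/-- `E` admits a rank function. -/
def HasRankFn {V : Type*} (E : Set (V × V)) : Prop :=
  ∃ ρ : V → ℝ, ∀ e ∈ E, ρ e.1 + 1 = ρ e.2

open Classical in
/-- Dimension of a polytope: dimension of its affine hull, `-1` for the empty set. -/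
noncomputable def polyDim {V : Type*} (s : Set (V → ℝ)) : ℤ :=
  if s = ∅ then -1 else (Module.finrank ℝ (affineSpan ℝ s).direction : ℤ)

/-- `F` is a face of `P`: `F = P` or `F` is the intersection of `P`
with a supporting hyperplane. -/
def IsFaceOf {V : Type*} (F P : Set (V → ℝ)) : Prop :=
  F = P ∨ ∃ (l : (V → ℝ) →ₗ[ℝ] ℝ) (c : ℝ), (∀ x ∈ P, l x ≤ c) ∧ F = {x ∈ P | l x = c}

/-- `F` is a facet of `P`: a face of dimension `dim P - 1`. -/
def IsFacetOf {V : Type*} (F P : Set (V → ℝ)) : Prop :=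
  IsFaceOf F P ∧ polyDim F = polyDim P - 1

/-- Each connected component of the subquiver `R1` is a full subquiver of `Q1`. -/
def ComponentsFull {V : Type*} (Q1 R1 : Set (V × V)) : Prop :=
  ∀ v w : V, Relation.EqvGen (edgeRel R1) v w → (v, w) ∈ Q1 → (v, w) ∈ R1

/-- Edge set of the contraction `Q/R`. -/
def contraction {V : Type*} (Q1 R1 : Set (V × V)) :
    Set (Quot (Relation.EqvGen (edgeRel R1)) × Quot (Relation.EqvGen (edgeRel R1))) :=
  {p | ∃ e ∈ Q1 \ R1, p = (Quot.mk _ e.1, Quot.mk _ e.2)}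

/-- A quiver is acyclic if it has no closed directed walk of length `> 1`. -/
def IsAcyclicQ {α : Type*} (E : Set (α × α)) : Prop :=
  ¬ ∃ (n : ℕ) (v : Fin (n + 1) → α), 1 < n ∧ v 0 = v (Fin.last n) ∧
      ∀ i : Fin n, (v i.castSucc, v i.succ) ∈ E

/-!
Reachability partially orders the vertices of the acyclic quiver `Q/R`. A linear extension of this
order embeds into `ℝ`, which gives a height function strictly increasing along every edge of `Q/R`.
Pulled back to `V`, it is constant on the components of `R` and strictly increases along the edges
outside `R`. A linear functional sending `e_v` to the height of `v` therefore vanishes on `ε_e` for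
`e ∈ R` and is negative on `ε_e` for the other edges of `Q`, so it cuts out `DE(R)`.
-/

section LinearAlgebra

variable {𝕜 E F : Type*}

theorem exists_linearMap_apply_eq_of_linearIndependent {ι : Type*} [DivisionRing 𝕜]
    [AddCommGroup E] [Module 𝕜 E] [AddCommGroup F] [Module 𝕜 F] {b : ι → E}
    (hb : LinearIndependent 𝕜 b) (g : ι → F) : ∃ l : E →ₗ[𝕜] F, ∀ i, l (b i) = g i := by
  obtain ⟨p, hp⟩ := (Finsupp.linearCombination 𝕜 b).exists_leftInverse_of_injective
    (LinearMap.ker_eq_bot.2 hb)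
  refine ⟨Finsupp.linearCombination 𝕜 g ∘ₗ p, fun i => ?_⟩
  have p_apply : p (b i) = Finsupp.single i 1 := by
    simpa using LinearMap.congr_fun hp (Finsupp.single i 1)
  simp [p_apply]

variable [Field 𝕜] [LinearOrder 𝕜] [IsStrictOrderedRing 𝕜] [AddCommGroup E] [Module 𝕜 E]

theorem convex_openHalfSpace_union {l : E →ₗ[𝕜] 𝕜} {c : 𝕜} {t : Set E} (ht : Convex 𝕜 t)
    (htc : ∀ x ∈ t, l x = c) : Convex 𝕜 ({x | l x < c} ∪ t) := by
  have combo_lt {x y : E} {a b : 𝕜} (hx : l x ≤ c) (hy : l y < c) (ha : 0 < a) (hb : 0 < b)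
      (hab : a + b = 1) : l (a • x + b • y) < c :=
    calc l (a • x + b • y) = a * l x + b * l y := by simp
      _ < a * c + b * c := add_lt_add_of_le_of_lt (by gcongr) (by gcongr)
      _ = c := by rw [← add_mul, hab, one_mul]
  refine convex_iff_forall_pos.2 fun x hx y hy a b ha hb hab => ?_
  rcases hx with hx | hx <;> rcases hy with hy | hy
  · exact .inl (combo_lt hx.le hy ha hb hab)
  · rw [add_comm]
    exact .inl (combo_lt (htc y hy).le hx hb ha (by rwa [add_comm]))
  · exact .inl (combo_lt (htc x hx).le hy ha hb hab)
  · exact .inr (ht hx hy ha.le hb.le hab)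

theorem convexHull_subset_halfSpace {l : E →ₗ[𝕜] 𝕜} {c : 𝕜} {s : Set E}
    (hs : ∀ x ∈ s, l x ≤ c) : convexHull 𝕜 s ⊆ {x | l x ≤ c} :=
  convexHull_min hs (convex_halfSpace_le l.isLinear c)

theorem convexHull_sep_eq_sep_convexHull {l : E →ₗ[𝕜] 𝕜} {c : 𝕜} {s : Set E}
    (hs : ∀ x ∈ s, l x ≤ c) :
    convexHull 𝕜 {x ∈ s | l x = c} = {x ∈ convexHull 𝕜 s | l x = c} := by
  have hull_sub_hyperplane : ∀ x ∈ convexHull 𝕜 {x ∈ s | l x = c}, l x = c :=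
    convexHull_min (fun x hx => hx.2) (convex_hyperplane l.isLinear c)
  have hull_sub_union : convexHull 𝕜 s ⊆ {x | l x < c} ∪ convexHull 𝕜 {x ∈ s | l x = c} := by
    refine convexHull_min (fun x hx => ?_)
      (convex_openHalfSpace_union (convex_convexHull 𝕜 _) hull_sub_hyperplane)
    exact (hs x hx).lt_or_eq.imp id fun hxc => subset_convexHull 𝕜 _ ⟨hx, hxc⟩
  refine Set.Subset.antisymm
    (fun x hx => ⟨convexHull_mono (Set.sep_subset _ _) hx, hull_sub_hyperplane x hx⟩) ?_
  rintro x ⟨hx, hxc⟩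
  exact (hull_sub_union hx).resolve_left hxc.not_lt

end LinearAlgebra

theorem isFaceOf_convexHull_sep {V : Type*} {s : Set (V → ℝ)} {l : (V → ℝ) →ₗ[ℝ] ℝ} {c : ℝ}
    (hs : ∀ x ∈ s, l x ≤ c) : IsFaceOf (convexHull ℝ {x ∈ s | l x = c}) (convexHull ℝ s) :=
  .inr ⟨l, c, convexHull_subset_halfSpace hs, convexHull_sep_eq_sep_convexHull hs⟩

section Potential

variable {V : Type*} [DecidableEq V]

theorem epsVec_eq_single_sub_single (e : V × V) :
    epsVec e = Pi.single e.1 1 - Pi.single e.2 1 := by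
  ext u
  simp [epsVec, Pi.single_apply]

theorem exists_linearMap_epsVec (g : V → ℝ) :
    ∃ l : (V → ℝ) →ₗ[ℝ] ℝ, ∀ e, l (epsVec e) = g e.1 - g e.2 := by
  obtain ⟨l, hl⟩ :=
    exists_linearMap_apply_eq_of_linearIndependent (Pi.linearIndependent_single_one V ℝ) g
  exact ⟨l, fun e => by rw [epsVec_eq_single_sub_single, map_sub, hl, hl]⟩

theorem isFaceOf_DE_of_potential {Q R : Set (V × V)} (hRQ : R ⊆ Q) (g : V → ℝ)
    (hR : ∀ e ∈ R, g e.1 = g e.2) (hQ : ∀ e ∈ Q \ R, g e.1 < g e.2) :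
    IsFaceOf (DE R) (DE Q) := by
  obtain ⟨l, hl⟩ := exists_linearMap_epsVec g
  have l_eq_zero : ∀ e ∈ R, l (epsVec e) = 0 := fun e he => by rw [hl, hR e he, sub_self]
  have l_neg : ∀ e ∈ Q \ R, l (epsVec e) < 0 := fun e he => by rw [hl]; exact sub_neg.2 (hQ e he)
  have l_nonpos : ∀ x ∈ epsVec '' Q, l x ≤ 0 := by
    rintro _ ⟨e, heQ, rfl⟩
    by_cases heR : e ∈ R
    · exact (l_eq_zero e heR).le
    · exact (l_neg e ⟨heQ, heR⟩).le
  have image_eq : epsVec '' R = {x ∈ epsVec '' Q | l x = 0} := by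
    refine Set.Subset.antisymm ?_ ?_
    · rintro _ ⟨e, heR, rfl⟩
      exact ⟨⟨e, hRQ heR, rfl⟩, l_eq_zero e heR⟩
    · rintro _ ⟨⟨e, heQ, rfl⟩, hl0⟩
      exact ⟨e, by_contra fun heR => (l_neg e ⟨heQ, heR⟩).ne hl0, rfl⟩
  unfold DE
  rw [image_eq]
  exact isFaceOf_convexHull_sep l_nonpos

end Potential

namespace IsAcyclicQ

variable {α : Type*} {E : Set (α × α)}

theorem length_eq_zero_of_head_eq_last (hE : IsAcyclicQ E) (p : RelSeries E)
    (hp : p.head = p.last) : p.length = 0 := by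
  by_contra hlen
  -- A closed walk of length 1 is allowed by `IsAcyclicQ`, so go around twice.
  let q := p.smash p hp.symm
  have one_lt_length : 1 < q.length := by
    change 1 < p.length + p.length
    lia
  have head_eq_last : q.head = q.last := by
    rw [RelSeries.head_smash, RelSeries.last_smash, hp]
  exact hE ⟨q.length, q, one_lt_length, head_eq_last, q.step⟩

theorem head_eq_last_of_smash_closed (hE : IsAcyclicQ E) {p q : RelSeries E}
    (hpq : p.last = q.head) (hqp : q.last = p.head) : p.head = p.last := by
  have length_add_eq_zero : p.length + q.length = 0 :=
    hE.length_eq_zero_of_head_eq_last (p.smash q hpq) (by simp [hqp])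
  have p_length : p.length = 0 := Nat.eq_zero_of_add_eq_zero_right length_add_eq_zero
  exact RelSeries.subsingleton_of_length_eq_zero p_length p.head_mem p.last_mem

/-- The reachability order on the vertices of an acyclic quiver: `a ≤ b` when a directed walk leads
from `a` to `b`. A directed walk is encoded as a `RelSeries` of the edge set. -/
abbrev reachabilityOrder (hE : IsAcyclicQ E) : PartialOrder α where
  le a b := ∃ p : RelSeries E, p.head = a ∧ p.last = b
  le_refl a := ⟨.singleton E a, by simp, by simp⟩
  le_trans := by
    rintro _ _ _ ⟨p, rfl, rfl⟩ ⟨q, hpq, rfl⟩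
    exact ⟨p.smash q hpq.symm, by simp, by simp⟩
  le_antisymm := by
    rintro _ _ ⟨p, rfl, rfl⟩ ⟨q, hpq, hqp⟩
    exact hE.head_eq_last_of_smash_closed hpq.symm hqp

theorem ne_of_mem (hE : IsAcyclicQ E) {a b : α} (hab : (a, b) ∈ E) : a ≠ b := by
  rintro rfl
  let loop : RelSeries E := (RelSeries.singleton E a).cons a (by simpa)
  have loop_length : loop.length = 0 := hE.length_eq_zero_of_head_eq_last loop (by simp [loop])
  simp [loop] at loop_length

theorem reachabilityOrder_lt_of_mem (hE : IsAcyclicQ E) {a b : α} (hab : (a, b) ∈ E) :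
    hE.reachabilityOrder.lt a b :=
  letI := hE.reachabilityOrder
  lt_of_le_of_ne ⟨(RelSeries.singleton E b).cons a (by simpa), by simp, by simp⟩ (hE.ne_of_mem hab)

end IsAcyclicQ

theorem exists_strictMono_of_countable (α β : Type*) [PartialOrder α] [Countable α] [LinearOrder β]
    [DenselyOrdered β] [Nontrivial β] : ∃ f : α → β, StrictMono f := by
  have : Countable (LinearExtension α) := ‹Countable α›
  obtain ⟨φ⟩ := Order.embedding_from_countable_to_dense (LinearExtension α) β
  have toLinearExtension_strictMono : StrictMono (toLinearExtension : α →o LinearExtension α) :=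
    toLinearExtension.monotone.strictMono_of_injective Function.injective_id
  exact ⟨φ ∘ toLinearExtension, φ.strictMono.comp toLinearExtension_strictMono⟩

theorem IsAcyclicQ.exists_height {α : Type*} [Countable α] {E : Set (α × α)} (hE : IsAcyclicQ E) :
    ∃ f : α → ℝ, ∀ a b, (a, b) ∈ E → f a < f b := by
  let := hE.reachabilityOrder
  obtain ⟨f, hf⟩ := exists_strictMono_of_countable α ℝ
  exact ⟨f, fun _ _ hab => hf (hE.reachabilityOrder_lt_of_mem hab)⟩

theorem face_of_acyclic_contraction_general {V : Type*} [DecidableEq V] {Q1 R1 : Set (V × V)}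
    [Countable (Quot (Relation.EqvGen (edgeRel R1)))] (hsub : R1 ⊆ Q1)
    (hacyc : IsAcyclicQ (contraction Q1 R1)) : IsFaceOf (DE R1) (DE Q1) := by
  obtain ⟨f, hf⟩ := hacyc.exists_height
  refine isFaceOf_DE_of_potential hsub (fun v => f (Quot.mk _ v)) (fun e he => ?_) (fun e he => ?_)
  · exact congrArg f (Quot.sound (.rel _ _ he))
  · exact hf _ _ ⟨e, he, rfl⟩

/-- If each connected component of a lluf proper subquiver `R` is a full subquiver of `Q`
and `Q/R` is acyclic, then `DE(R)` is a face of `DE(Q)`. -/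
theorem face_of_acyclic_contraction {V : Type*} [Fintype V] [DecidableEq V]
    (Q1 R1 : Set (V × V)) (hloop : ∀ v : V, (v, v) ∉ Q1) (hproper : R1 ⊂ Q1)
    (hfull : ComponentsFull Q1 R1) (hacyc : IsAcyclicQ (contraction Q1 R1)) :
    IsFaceOf (DE R1) (DE Q1) :=
  face_of_acyclic_contraction_general hproper.subset hacyc
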